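/- (Theorem 1, uniformly bounded terminal accuracy of two-step relaxed SBPC.) Let E, F be real normed vector spaces, a_x, a_u class-𝒦 functions, and f : E → F → E satisfy ‖f(x¹,u) − f(x²,u)‖ ≤ a_x(‖x¹ − x²‖) and ‖f(x,u¹) − f(x,u²)‖ ≤ a_u(‖u¹ − u²‖) for all arguments. Let U_c ⊆ F, let X_f ⊆ E be nonempty, let L ≥ 1 and k_f ≥ 1 with L dividing k_f, and let d̄ > 0. Suppose: (i) at time 0, there exists an admissible blocked sequence v₀ (v₀(i) ∈ U_c for i = 1,…,N(0)) whose nominal blocked-input trajectory from x̃(0) has terminal state in X_f; (ii) for each k = 0,…,k_f−1, the controller selects an admissible blocked sequence v^r_k at (x̃(k), k) whose nominal terminal distance Δ(x(k_f−k|k), X_f) is less than or equal to that achieved by every admissible blocked sequence at (x̃(k), k); (iii) the closed loop evolves as x̃(k+1) = f(x̃(k), v^r_k(1) + d(k)) with ‖d(k)‖ ≤ d̄. Then the terminal state satisfies Δ(x̃(k_f), X_f) ≤ Σ_{k=0}^{k_f−1} β_{k_f−k−1}(d̄), where β_0(d) = a_u(d) and β_j(d) = a_u(d) + a_x(β_{j−1}(d))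 for j ≥ 1. -/

import Mathlib

/-!
Let `D k` be the least nominal terminal distance to `Xf` over admissible sequences at
`(xt k, k)`. Feasibility at time `0` gives `D 0 = 0`. The tail of the optimal sequence at time
`k` is admissible at time `k + 1` (`Admissible.tail`, which uses `L ∣ kf`), and from the
undisturbed successor state it reproduces the remaining nominal trajectory (`traj_tail`). The
true successor differs from the undisturbed one by at most `au dbar`, an error that becomes at
most `beta (kf - k - 1) dbar` at the end of the horizon (`traj_perturb`). Hence
`D (k + 1) ≤ D k + beta (kf - k - 1) dbar`, and summing over `k` gives the bound.
-/

open scoped NNReal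

/-- A function `a : [0,∞) → [0,∞)` is of class 𝒦 if it is continuous,
strictly increasing, and satisfies `a 0 = 0`. -/
def IsClassK (a : ℝ≥0 → ℝ≥0) : Prop :=
  Continuous a ∧ StrictMono a ∧ a 0 = 0

/-- The sequence β_k defined by β_0 = a_u and β_k(d) = a_u(d) + a_x(β_{k-1}(d)). -/
def beta (au ax : ℝ≥0 → ℝ≥0) : ℕ → ℝ≥0 → ℝ≥0
  | 0, d => au d
  | k + 1, d => au d + ax (beta au ax k d)

/-- The blocking index b(j,k) = ⌊(j + k − ⌊k/L⌋·L)/L⌋ + 1. -/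
def bIdx (L j k : ℕ) : ℕ := (j + k - k / L * L) / L + 1

/-- The number of free (blocked) input values N(k) = ⌈(k_f − k)/L⌉. -/
def Nfree (L kf k : ℕ) : ℕ := (kf - k + L - 1) / L

/-- The nominal blocked-input trajectory x(j|k) from state x at time k:
x(0|k) = x and x(j+1|k) = f(x(j|k), v(b(j,k))). -/
def traj {E F : Type*} (f : E → F → E) (L : ℕ) (v : ℕ → F) (x : E) (k : ℕ) : ℕ → E
  | 0 => x
  | j + 1 => f (traj f L v x k j) (v (bIdx L j k))

/-- A blocked input sequence v is admissible at time k if v(i) ∈ U_c for i = 1,…,N(k). -/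
def Admissible {F : Type*} (Uc : Set F) (L kf k : ℕ) (v : ℕ → F) : Prop :=
  ∀ i, 1 ≤ i → i ≤ Nfree L kf k → v i ∈ Uc

/-- When the first step of the horizon is dropped, the number of blocks consumed is
`(k + 1) / L - k / L`, which is `1` if a block ends at time `k` and `0` otherwise. -/
def tailShift (L k : ℕ) : ℕ := (k + 1) / L - k / L

lemma bIdx_eq (L j k : ℕ) : bIdx L j k = (j + k) / L - k / L + 1 := by
  unfold bIdx
  rw [mul_comm, Nat.sub_mul_div]

lemma bIdx_zero (L k : ℕ) : bIdx L 0 k = 1 := by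
  simp [bIdx_eq]

lemma bIdx_succ_add_tailShift (L j k : ℕ) :
    bIdx L j (k + 1) + tailShift L k = bIdx L (j + 1) k := by
  rw [bIdx_eq, bIdx_eq, tailShift, show j + 1 + k = j + (k + 1) by omega]
  have h1 : k / L ≤ (k + 1) / L := Nat.div_le_div_right (by omega)
  have h2 : (k + 1) / L ≤ (j + (k + 1)) / L := Nat.div_le_div_right (by omega)
  omega

/-- Because `L` divides the horizon, the rounding up in `Nfree` becomes a floor of `k / L`. -/
lemma Nfree_eq {L m k : ℕ} (hL : 1 ≤ L) (hk : k ≤ L * m) :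
    Nfree L (L * m) k = m - k / L := by
  have hr : k % L < L := Nat.mod_lt _ hL
  have hq : k / L ≤ m := Nat.div_le_of_le_mul hk
  obtain ⟨c, rfl⟩ := Nat.exists_eq_add_of_le hq
  have hk' := Nat.div_add_mod k L
  have hnum : L * (k / L + c) - k + L - 1 = (L - 1 - k % L) + L * c := by
    rw [mul_add] at *
    omega
  rw [Nfree, hnum, Nat.add_mul_div_left _ _ hL, Nat.div_eq_of_lt (by omega)]
  omega

lemma Nfree_succ_add_tailShift {L kf k : ℕ} (hL : 1 ≤ L) (hdvd : L ∣ kf) (hk : k < kf) :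
    Nfree L kf (k + 1) + tailShift L k = Nfree L kf k := by
  obtain ⟨m, rfl⟩ := hdvd
  rw [Nfree_eq (k := k + 1) hL hk, Nfree_eq hL hk.le, tailShift]
  have h1 : k / L ≤ (k + 1) / L := Nat.div_le_div_right (by omega)
  have h2 : (k + 1) / L ≤ m := Nat.div_le_of_le_mul hk
  omega

lemma Admissible.tail {F : Type*} {Uc : Set F} {L kf k : ℕ} {v : ℕ → F}
    (hL : 1 ≤ L) (hdvd : L ∣ kf) (hk : k < kf) (hv : Admissible Uc L kf k v) :
    Admissible Uc L kf (k + 1) (fun i => v (i + tailShift L k)) := by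
  intro i hi hiN
  have := Nfree_succ_add_tailShift hL hdvd hk
  exact hv _ (by omega) (by omega)

/-- The tail of a blocked sequence reproduces the original nominal trajectory when started
from the undisturbed successor state. -/
lemma traj_tail {E F : Type*} (f : E → F → E) (L : ℕ) (v : ℕ → F) (x : E) (k j : ℕ) :
    traj f L (fun i => v (i + tailShift L k)) (f x (v 1)) (k + 1) j =
      traj f L v x k (j + 1) := by
  induction j with
  | zero => simp [traj, bIdx_zero]
  | succ j ih =>
    rw [traj, ih, bIdx_succ_add_tailShift]
    rfl

/-- An initial error of at most `a_u(d)` grows to at most `β_j(d)` after `j` nominal steps. -/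
lemma traj_perturb {E F : Type*} [NormedAddCommGroup E] {ax au : ℝ≥0 → ℝ≥0}
    (hax : Monotone ax) {f : E → F → E}
    (hfx : ∀ (x1 x2 : E) (u : F), ‖f x1 u - f x2 u‖₊ ≤ ax ‖x1 - x2‖₊)
    (L : ℕ) (v : ℕ → F) {x y : E} (k : ℕ) {δ : ℝ≥0} (hxy : ‖x - y‖₊ ≤ au δ) (j : ℕ) :
    ‖traj f L v x k j - traj f L v y k j‖₊ ≤ beta au ax j δ := by
  induction j with
  | zero => exact hxy
  | succ j ih => exact ((hfx _ _ _).trans (hax ih)).trans le_add_self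

lemma infNndist_le_add_of_nnnorm_sub_le {E : Type*} [NormedAddCommGroup E] {x y : E}
    (s : Set E) {c : ℝ≥0} (h : ‖x - y‖₊ ≤ c) :
    Metric.infNndist x s ≤ Metric.infNndist y s + c := by
  have h' : dist x y ≤ c := by rw [dist_eq_norm]; exact_mod_cast h
  rw [← NNReal.coe_le_coe, NNReal.coe_add, Metric.coe_infNndist, Metric.coe_infNndist]
  exact Metric.infDist_le_infDist_add_dist.trans (by gcongr)

/-- Theorem 1: uniformly bounded terminal accuracy of the two-step
relaxed SBPC strategy. If (i) the nominal FHOCP is feasible at time 0 (terminal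
constraint), (ii) at each time k the controller selects an admissible blocked sequence
minimizing the nominal terminal distance to X_f, and (iii) the closed loop evolves with
input disturbance bounded by d̄, then Δ(x̃(k_f), X_f) ≤ Σ_{k=0}^{k_f−1} β_{k_f−k−1}(d̄). -/
theorem relaxed_SBPC_terminal_accuracy {E F : Type*}
    [NormedAddCommGroup E] [NormedSpace ℝ E] [NormedAddCommGroup F] [NormedSpace ℝ F]
    (ax au : ℝ≥0 → ℝ≥0) (hax : IsClassK ax) (hau : IsClassK au)
    (f : E → F → E)
    (hfx : ∀ (x1 x2 : E) (u : F), ‖f x1 u - f x2 u‖₊ ≤ ax ‖x1 - x2‖₊)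
    (hfu : ∀ (x : E) (u1 u2 : F), ‖f x u1 - f x u2‖₊ ≤ au ‖u1 - u2‖₊)
    (Uc : Set F) (Xf : Set E) (hXf : Xf.Nonempty)
    (L kf : ℕ) (hL : 1 ≤ L) (hkf : 1 ≤ kf) (hdvd : L ∣ kf)
    (dbar : ℝ≥0) (hdbar : 0 < dbar)
    (xt : ℕ → E) (d : ℕ → F) (vr : ℕ → ℕ → F)
    -- (i) feasibility of the nominal FHOCP at time 0
    (hfeas0 : ∃ v0 : ℕ → F, Admissible Uc L kf 0 v0 ∧ traj f L v0 (xt 0) 0 kf ∈ Xf)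
    -- (ii) at each k, the controller's sequence is admissible and minimizes the
    -- nominal terminal distance to X_f among all admissible sequences
    (hadm : ∀ k < kf, Admissible Uc L kf k (vr k))
    (hopt : ∀ k < kf, ∀ v : ℕ → F, Admissible Uc L kf k v →
      Metric.infNndist (traj f L (vr k) (xt k) k (kf - k)) Xf ≤
        Metric.infNndist (traj f L v (xt k) k (kf - k)) Xf)
    -- (iii) closed-loop evolution with bounded input disturbance
    (hcl : ∀ k < kf, xt (k + 1) = f (xt k) (vr k 1 + d k))
    (hd : ∀ k < kf, ‖d k‖₊ ≤ dbar) :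
    Metric.infNndist (xt kf) Xf ≤ ∑ k ∈ Finset.range kf, beta au ax (kf - k - 1) dbar := by
  -- At each time `k`, some admissible sequence has nominal terminal distance bounded by the
  -- partial sum; at `k = kf` the remaining horizon is empty and this is the claim.
  have key : ∀ k ≤ kf, ∃ v : ℕ → F, Admissible Uc L kf k v ∧
      Metric.infNndist (traj f L v (xt k) k (kf - k)) Xf ≤
        ∑ i ∈ Finset.range k, beta au ax (kf - i - 1) dbar := by
    intro k
    induction k with
    | zero =>
      intro _
      obtain ⟨v0, hv0, hmem⟩ := hfeas0
      refine ⟨v0, hv0, ?_⟩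
      rw [← NNReal.coe_le_coe, Metric.coe_infNndist]
      simp [Metric.infDist_zero_of_mem hmem]
    | succ k ih =>
      intro hk
      obtain ⟨v, hv, hvle⟩ := ih (by omega)
      refine ⟨_, (hadm k hk).tail hL hdvd hk, ?_⟩
      have herr : ‖xt (k + 1) - f (xt k) (vr k 1)‖₊ ≤ au dbar := by
        rw [hcl k hk]
        refine (hfu _ _ _).trans (hau.2.1.monotone ?_)
        simpa using hd k hk
      have hpert := traj_perturb hax.2.1.monotone hfx L
        (fun i => vr k (i + tailShift L k)) (k + 1) herr (kf - k - 1)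
      rw [traj_tail, show kf - k - 1 + 1 = kf - k by omega] at hpert
      rw [Finset.sum_range_succ, ← Nat.sub_sub]
      refine (infNndist_le_add_of_nnnorm_sub_le Xf hpert).trans ?_
      gcongr
      exact (hopt k hk v hv).trans hvle
  obtain ⟨v, -, hv⟩ := key kf le_rfl
  simpa [traj] using hv
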